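/- Let Γ ⊆ [0,∞) be a set of real numbers satisfying the descending chain condition. Then there exists a set Γ' ⊆ [0,1] satisfying the descending chain condition, depending only on Γ, with the following property. Let r be a positive integer, a a nonnegative integer, t ∈ Γ with t ≤ 1, let l, m, n be nonnegative integers, let p₁,…,p_l, q₁,…,q_m, λ₁,…,λ_n be nonnegative integers, and let b₁,…,b_l, c₁,…,c_m, μ₁,…,μ_n be elements of Γ, such that either (a = 0 and qₖ·cₖ = 0 for every k) or (a ≥ 1 and Σₖ qₖ·cₖ ≤ 1). Set v := (1/r)·( t·(a + r − 1) + Σᵢ pᵢ·bᵢ + (1−t)·(r−1 + Σₖ qₖ·cₖ) + Σⱼ λⱼ·μⱼ ). If v ≤ 1, then v ∈ Γ'. -/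

import Mathlib

/-!
Write `s = ∑ pᵢ bᵢ + ∑ λⱼ μⱼ` and `σ = ∑ qₖ cₖ`; both lie in the additive monoid `M` generated by
`Γ`, which is well-ordered because `Γ` is a well-ordered set of nonnegative reals (Higman's lemma,
`Set.IsPWO.addSubmonoid_closure`). The key identity is
`v = 1 - (1 - w) / r` with `w = s` if `a = 0` and
`w = (s + (a - 1) t) + (1 - (1 - t) (1 - σ))` if `a ≥ 1`.
Both expressions for `w` lie in `M + {1 - (1 - x) (1 - y) | x, y ∈ M, x, y ≤ 1}`. Since
`1 - (1 - x) (1 - y)` is monotone in `x, y ≤ 1`, and `1 - (1 - w) / r` is monotone in `r ≥ 1` and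
`w ≤ 1`, everything is a monotone image of a product of partially well-ordered sets, hence
partially well-ordered, i.e. DCC.
-/

/-- A set of real numbers satisfies the descending chain condition (DCC) if it
contains no infinite strictly decreasing sequence. -/
def DCC (S : Set ℝ) : Prop := ∀ f : ℕ → ℝ, (∀ k, f k ∈ S) → ¬ StrictAnti f

open scoped Pointwise

/-- For sets of reals, DCC is partial well-ordering; the latter passes to products and to monotone
images. -/
lemma dcc_iff_isPWO (S : Set ℝ) : DCC S ↔ S.IsPWO := by
  rw [Set.isPWO_iff_isWF, Set.isWF_iff_no_descending_seq]
  exact ⟨fun h f hf hmem => h f hmem hf, fun h f hmem hf => h f hf hmem⟩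

/-- The set of values `1 - (1 - x) (1 - y)` with `x, y ∈ M` and `x, y ≤ 1`. -/
def coprodSet (M : Set ℝ) : Set ℝ :=
  (fun z : ℝ × ℝ => 1 - (1 - z.1) * (1 - z.2)) '' ((M ∩ Set.Iic 1) ×ˢ (M ∩ Set.Iic 1))

lemma coprodSet_isPWO {M : Set ℝ} (hM : M.IsPWO) : (coprodSet M).IsPWO := by
  have h1 := hM.mono (Set.inter_subset_left (t := Set.Iic (1 : ℝ)))
  refine (h1.prod h1).image_of_monotoneOn ?_
  rintro ⟨x, y⟩ hx ⟨x', y'⟩ hx' ⟨hxx, hyy⟩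
  simp only [Set.mem_prod, Set.mem_inter_iff, Set.mem_Iic] at hx hx' hxx hyy ⊢
  nlinarith [mul_nonneg (sub_nonneg.2 hxx) (sub_nonneg.2 hx.2.2),
    mul_nonneg (sub_nonneg.2 hyy) (sub_nonneg.2 hx'.1.2)]

/-- The set of values `1 - (1 - w) / r` with `r` a positive integer, `w ∈ W` and `w ≤ 1`. -/
def hyperSet (W : Set ℝ) : Set ℝ :=
  (fun z : ℕ × ℝ => 1 - (1 - z.2) / (z.1 : ℝ)) '' (Set.Ici 1 ×ˢ (W ∩ Set.Iic 1))

lemma hyperSet_isPWO {W : Set ℝ} (hW : W.IsPWO) : (hyperSet W).IsPWO := by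
  have h1 := hW.mono (Set.inter_subset_left (t := Set.Iic (1 : ℝ)))
  have h2 : (Set.Ici (1 : ℕ)).IsPWO := Set.isPWO_iff_isWF.2 (Set.IsWF.of_wellFoundedLT _)
  refine (h2.prod h1).image_of_monotoneOn ?_
  rintro ⟨r, w⟩ hx ⟨r', w'⟩ hx' ⟨hr, hw⟩
  simp only [Set.mem_prod, Set.mem_inter_iff, Set.mem_Iic, Set.mem_Ici] at hx hx' hr hw ⊢
  have hr0 : (0 : ℝ) < r := by exact_mod_cast hx.1
  have hrr : (r : ℝ) ≤ r' := by exact_mod_cast hr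
  have := div_le_div₀ (sub_nonneg.2 hx.2.2) (sub_le_sub_left hw 1) hr0 hrr
  linarith

lemma sum_mem_closure {Γ : Set ℝ} {n : ℕ} (p : Fin n → ℕ) (b : Fin n → ℝ) (hb : ∀ i, b i ∈ Γ) :
    (∑ i, (p i : ℝ) * b i) ∈ AddSubmonoid.closure Γ := by
  refine sum_mem fun i _ => ?_
  rw [← nsmul_eq_mul]
  exact nsmul_mem (AddSubmonoid.subset_closure (hb i)) _

theorem stmt_7 (Γ : Set ℝ) (hΓ : Γ ⊆ Set.Ici (0 : ℝ)) (hDCC : DCC Γ) :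
    ∃ Γ' : Set ℝ, Γ' ⊆ Set.Icc (0 : ℝ) 1 ∧ DCC Γ' ∧
      ∀ (r : ℕ), 0 < r → ∀ (a : ℕ) (t : ℝ), t ∈ Γ → t ≤ 1 →
        ∀ (l m n : ℕ) (p : Fin l → ℕ) (q : Fin m → ℕ) (lam : Fin n → ℕ)
          (b : Fin l → ℝ) (c : Fin m → ℝ) (mu : Fin n → ℝ),
          (∀ i, b i ∈ Γ) → (∀ k, c k ∈ Γ) → (∀ j, mu j ∈ Γ) →
          ((a = 0 ∧ ∀ k, (q k : ℝ) * c k = 0) ∨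
            (1 ≤ a ∧ (∑ k, (q k : ℝ) * c k) ≤ 1)) →
          ∀ v : ℝ,
            v = (1 / (r : ℝ)) * (t * ((a : ℝ) + (r : ℝ) - 1) + (∑ i, (p i : ℝ) * b i)
                + (1 - t) * ((r : ℝ) - 1 + ∑ k, (q k : ℝ) * c k)
                + ∑ j, (lam j : ℝ) * mu j) →
            v ≤ 1 → v ∈ Γ' := by
  set M : AddSubmonoid ℝ := AddSubmonoid.closure Γ with hM
  have hMpwo : (M : Set ℝ).IsPWO :=
    Set.IsPWO.addSubmonoid_closure (fun x hx => hΓ hx) ((dcc_iff_isPWO Γ).1 hDCC)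
  have hM0 : ∀ x ∈ M, 0 ≤ x := fun x hx =>
    (AddSubmonoid.closure_le (S := AddSubmonoid.nonneg ℝ)).2 hΓ hx
  have hWpwo : ((M : Set ℝ) + coprodSet M).IsPWO := hMpwo.add (coprodSet_isPWO hMpwo)
  refine ⟨hyperSet ((M : Set ℝ) + coprodSet M) ∩ Set.Icc 0 1, Set.inter_subset_right,
    (dcc_iff_isPWO _).2 ((hyperSet_isPWO hWpwo).mono Set.inter_subset_left), ?_⟩
  intro r hr a t ht ht1 l m n p q lam b c mu hb hc hmu hcase v hv hv1
  have hP := sum_mem_closure p b hb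
  have hσ := sum_mem_closure q c hc
  have hL := sum_mem_closure lam mu hmu
  have hcase' : (a = 0 ∧ (∑ k, (q k : ℝ) * c k) = 0) ∨ (1 ≤ a ∧ (∑ k, (q k : ℝ) * c k) ≤ 1) :=
    hcase.imp_left fun h => ⟨h.1, Finset.sum_eq_zero fun k _ => h.2 k⟩
  generalize (∑ i, (p i : ℝ) * b i) = P at *
  generalize (∑ k, (q k : ℝ) * c k) = σ at *
  generalize (∑ j, (lam j : ℝ) * mu j) = L at *
  have hr1 : (1 : ℝ) ≤ r := by exact_mod_cast hr
  have hr0 : (0 : ℝ) < r := by linarith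
  have htM : t ∈ M := AddSubmonoid.subset_closure ht
  have ht0 := hM0 t htM
  have hP0 := hM0 P hP
  have hL0 := hM0 L hL
  have hσ0 := hM0 σ hσ
  have hS : P + L ∈ M := add_mem hP hL
  obtain ⟨w, hwW, hw0, hvw⟩ : ∃ w ∈ (M : Set ℝ) + coprodSet M, 0 ≤ w ∧ v = 1 - (1 - w) / r := by
    rcases hcase' with ⟨rfl, rfl⟩ | ⟨ha, hσ1⟩
    -- `0 ∈ coprodSet M`, from `x = y = 0`, so `w = s + 0` is allowed when `a = 0`
    · refine ⟨P + L, ⟨P + L, hS, 0, ⟨(0, 0), ?_, by norm_num⟩, add_zero _⟩, by linarith, ?_⟩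
      · exact ⟨⟨zero_mem M, zero_le_one' ℝ⟩, ⟨zero_mem M, zero_le_one' ℝ⟩⟩
      · rw [hv]
        push_cast
        field_simp
        ring
    · obtain ⟨k, rfl⟩ := Nat.exists_eq_add_of_le ha
      have hkM : (k : ℝ) * t ∈ M := by
        rw [← nsmul_eq_mul]
        exact nsmul_mem htM _
      refine ⟨(P + L + k * t) + (1 - (1 - t) * (1 - σ)),
        ⟨_, add_mem hS hkM, _, ⟨(t, σ), ⟨⟨htM, ht1⟩, ⟨hσ, hσ1⟩⟩, rfl⟩, rfl⟩, ?_, ?_⟩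
      · have := hM0 _ hkM
        nlinarith [mul_nonneg (sub_nonneg.2 ht1) hσ0]
      · rw [hv]
        push_cast
        field_simp
        ring
  have hw1 : w ≤ 1 := by
    by_contra! h
    have := div_neg_of_neg_of_pos (sub_neg.2 h) hr0
    linarith
  refine ⟨⟨(r, w), ⟨hr, hwW, hw1⟩, hvw.symm⟩, ?_, hv1⟩
  have : (1 - w) / r ≤ 1 := (div_le_one hr0).2 (by linarith)
  linarith
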